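/- For each dimension n there is a constant ε_n > 0 such that the following holds: if g is any Riemannian metric on real projective space RP^n and R < (1/2)·Sys(RP^n, g), then there is a point p ∈ RP^n such that the metric ball of radius R around p has Riemannian volume at least ε_n · R^n. -/

import Mathlib

/-!
Formalization of a statement from L. Guth, "Systolic inequalities and minimal hypersurfaces"
(arXiv:0903.5299).

Since Mathlib does not have Riemannian metrics, a Riemannian metric `g` on a closed manifold
is encoded by its geodesic distance function: a (length/intrinsic) metric space structure.
Lengths of curves are computed from the distance as the total variation, which for the geodesic
distance of a Riemannian metric agrees with the Riemannian length.  The `d`-dimensional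
Riemannian volume is encoded as the `d`-dimensional Hausdorff measure (with the normalization
constant `ω_d/2^d` making it agree with the Riemannian volume on `d`-dimensional Riemannian
submanifolds).
-/

open MeasureTheory Metric Set
open scoped ENNReal

noncomputable section

/-- The length (total variation, i.e. arclength) of a path in an (extended) metric space.
For a path in a Riemannian manifold, computing it with respect to the geodesic distance
gives the Riemannian length of the path. -/
def pathLength {X : Type} [PseudoEMetricSpace X] {x y : X} (γ : Path x y) : ℝ≥0∞ :=
  eVariationOn (fun t => γ t) Set.univ

/-- A metric is a length (intrinsic) metric: the distance between two points is the infimum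
of the lengths of paths joining them.  The geodesic distance of a Riemannian metric is a
length metric. -/
def IsLengthMetric (X : Type) [PseudoEMetricSpace X] : Prop :=
  ∀ x y : X, edist x y = ⨅ γ : Path x y, pathLength γ

/-- The systole of a space: the infimum of the lengths of all non-contractible closed curves. -/
def systole (X : Type) [PseudoEMetricSpace X] : ℝ≥0∞ :=
  ⨅ (x : X) (γ : Path x x) (_ : ¬γ.Homotopic (Path.refl x)), pathLength γ

/-- The volume `ω_d = π^(d/2)/Γ(d/2+1)` of the Euclidean unit ball in dimension `d`. -/
def unitBallVolume (d : ℕ) : ℝ≥0∞ :=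
  ENNReal.ofReal (Real.pi ^ ((d : ℝ) / 2) / Real.Gamma ((d : ℝ) / 2 + 1))

/-- The `d`-dimensional Riemannian volume of a subset of a metric space: the `d`-dimensional
Hausdorff measure, normalized (à la Federer, by `ω_d/2^d`) so that it agrees with the
Riemannian volume on `d`-dimensional Riemannian manifolds and their `d`-dimensional
submanifolds. -/
def rvol (d : ℕ) {X : Type} [EMetricSpace X] [MeasurableSpace X] [BorelSpace X]
    (s : Set X) : ℝ≥0∞ :=
  (unitBallVolume d / 2 ^ d) * μH[(d : ℝ)] s

/-- The antipodal identification on the unit sphere in `ℝⁿ⁺¹`. -/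
def antipodalSetoid (n : ℕ) :
    Setoid (Metric.sphere (0 : EuclideanSpace ℝ (Fin (n + 1))) 1) where
  r x y := (x : EuclideanSpace ℝ (Fin (n + 1))) = y ∨
    (x : EuclideanSpace ℝ (Fin (n + 1))) = -(y : EuclideanSpace ℝ (Fin (n + 1)))
  iseqv := by
    constructor
    · intro x; exact Or.inl rfl
    · rintro x y (h | h)
      · exact Or.inl h.symm
      · right; rw [h, neg_neg]
    · rintro x y z (h1 | h1) (h2 | h2)
      · exact Or.inl (h1.trans h2)
      · exact Or.inr (h1.trans h2)
      · right; rw [h1, h2]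
      · left; rw [h1, h2, neg_neg]

/-- The standard topological real projective `n`-space, as the quotient of the unit sphere
in `ℝⁿ⁺¹` by the antipodal identification. -/
abbrev RealProjectiveSpace (n : ℕ) : Type := Quotient (antipodalSetoid n)

/-!
Suppose every ball of radius `R` has volume less than `ε Rⁿ`. Choose disjoint open sets, each inside
a ball of radius `R`, so that the hypersurface left over has almost minimal area. Cutting along a
distance sphere instead cannot save much area, and by Eilenberg's inequality some sphere of radius
between `R / 2` and `R` has small area; so the hypersurface has small area in every ball of radius
`R / 2`. Descending through the dimensions, `ℝℙⁿ` is covered by `n` layers of disjoint open sets,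
each inside a ball of radius `R`.

Since `2 R < Sys`, points over a ball of radius `R` that are joined to a fixed lift of its center by
lifts of paths shorter than `R` form one of two disjoint sheets. Hence the preimage of a layer in
the sphere is contained in `B ∪ -B` with `B` open and disjoint from `-B`. By the
Lusternik–Schnirelmann theorem `n` such pairs do not cover `Sⁿ`. The latter is the cup-length
argument `αⁿ ≠ 0`, carried out with mod 2 chains: the functions `1_{B j}` on the vertices have
coboundaries whose cup product is nonzero on an antipodally symmetric fine triangulation of `Sⁿ`,
so some simplex avoids every `B j ∪ -B j`.
-/

open Finsupp (single linearCombination linearCombination_single)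

/-- Ordered simplicial chains mod 2: a simplex is the list of its vertices, repetitions allowed. -/
abbrev Mod2Chain (V : Type*) := List V →₀ ZMod 2

namespace Mod2Chain

section Chains

variable {V N : Type*} [AddCommGroup N] [Module (ZMod 2) N]

/-- The chains all of whose simplices belong to `A`. -/
abbrev chainsOn (A : Set (List V)) : Submodule (ZMod 2) (Mod2Chain V) :=
  Finsupp.supported (ZMod 2) (ZMod 2) A

/-- The simplices with exactly `k` vertices, hence of dimension `k - 1`, all lying in `X`. -/
def simplicesIn (k : ℕ) (X : Set V) : Set (List V) :=
  {l | l.length = k ∧ ∀ v ∈ l, v ∈ X}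

lemma linearMap_ext {f g : Mod2Chain V →ₗ[ZMod 2] N}
    (h : ∀ l, f (single l 1) = g (single l 1)) : f = g :=
  Finsupp.lhom_ext' fun l => LinearMap.ext_ring (h l)

lemma single_mem_chainsOn {A : Set (List V)} {l : List V} (hl : l ∈ A) :
    (single l 1 : Mod2Chain V) ∈ chainsOn A :=
  Finsupp.single_mem_supported _ _ hl

lemma map_mem_of_mem_chainsOn {A : Set (List V)} {P : Submodule (ZMod 2) N}
    {T : Mod2Chain V →ₗ[ZMod 2] N} (h : ∀ l ∈ A, T (single l 1) ∈ P) {c : Mod2Chain V}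
    (hc : c ∈ chainsOn A) : T c ∈ P := by
  have hle : chainsOn A ≤ P.comap T := by
    rw [chainsOn, Finsupp.supported_eq_span_single, Submodule.span_le]
    rintro _ ⟨l, hl, rfl⟩
    exact h l hl
  exact hle hc

lemma map_eq_map_of_mem_chainsOn {A : Set (List V)} {S T : Mod2Chain V →ₗ[ZMod 2] N}
    (h : ∀ l ∈ A, S (single l 1) = T (single l 1)) {c : Mod2Chain V} (hc : c ∈ chainsOn A) :
    S c = T c := by
  have hmem : (S - T) c ∈ (⊥ : Submodule (ZMod 2) N) :=
    map_mem_of_mem_chainsOn (fun l hl => by simp [h l hl]) hc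
  simpa [sub_eq_zero] using hmem

lemma add_self (c : Mod2Chain V) : c + c = 0 := by
  ext l
  exact CharTwo.add_self_eq_zero (c l)

/-- The cone with apex `b` over a chain. -/
def cone (b : V) : Mod2Chain V →ₗ[ZMod 2] Mod2Chain V :=
  Finsupp.lmapDomain _ _ (List.cons b)

lemma cone_single (b : V) (l : List V) : cone b (single l 1) = single (b :: l) 1 := by
  simp [cone]

lemma cone_mem_chainsOn {A B : Set (List V)} {b : V} (h : ∀ l ∈ A, b :: l ∈ B)
    {c : Mod2Chain V} (hc : c ∈ chainsOn A) : cone b c ∈ chainsOn B :=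
  map_mem_of_mem_chainsOn (fun l hl => cone_single b l ▸ single_mem_chainsOn (h l hl)) hc

/-- The boundary of a simplex. A point has the empty simplex as its boundary, so that the chain
complex is augmented. -/
def boundarySimplex : List V → Mod2Chain V
  | [] => 0
  | a :: l => single l 1 + cone a (boundarySimplex l)

/-- The simplicial boundary operator. -/
def boundary : Mod2Chain V →ₗ[ZMod 2] Mod2Chain V :=
  linearCombination (ZMod 2) boundarySimplex

lemma boundary_single (l : List V) : boundary (single l 1) = boundarySimplex l := by
  simp [boundary]

lemma boundary_cone (b : V) (c : Mod2Chain V) : boundary (cone b c) = c + cone b (boundary c) := by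
  have h : boundary ∘ₗ cone b = LinearMap.id + cone b ∘ₗ boundary :=
    linearMap_ext fun l => by simp [cone_single, boundary_single, boundarySimplex]
  exact LinearMap.congr_fun h c

lemma boundary_boundarySimplex (l : List V) : boundary (boundarySimplex l) = 0 := by
  induction l with
  | nil => simp [boundarySimplex]
  | cons a l ih =>
    rw [boundarySimplex, map_add, boundary_single, boundary_cone, ih, map_zero, add_zero, add_self]

lemma boundarySimplex_mem_chainsOn {k : ℕ} {X : Set V} {l : List V}
    (hl : l ∈ simplicesIn (k + 1) X) : boundarySimplex l ∈ chainsOn (simplicesIn k X) := by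
  induction l generalizing k with
  | nil => simp [boundarySimplex]
  | cons a l ih =>
    obtain ⟨hlen, ha, hX⟩ : l.length = k ∧ a ∈ X ∧ ∀ v ∈ l, v ∈ X := by
      simpa [simplicesIn] using hl
    refine add_mem (single_mem_chainsOn ⟨hlen, hX⟩) ?_
    obtain _ | k := k
    · simp [List.length_eq_zero_iff.1 hlen, boundarySimplex]
    · refine cone_mem_chainsOn (fun l' hl' => ?_) (ih ⟨hlen, hX⟩)
      exact ⟨congrArg (· + 1) hl'.1, List.forall_mem_cons.2 ⟨ha, hl'.2⟩⟩

end Chains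

section Cup

variable {V : Type*}

/-- The cup product `δf₁ ∪ ⋯ ∪ δfₖ` of the coboundaries of the functions in a list, evaluated on
a `k`-simplex. -/
def cup : List (V → ZMod 2) → List V → ZMod 2
  | [], _ => 1
  | f :: fs, a :: b :: l => (f a + f b) * cup fs (b :: l)
  | _ :: _, _ => 0

/-- The cochain `f ∪ δf₁ ∪ ⋯ ∪ δfₖ`, whose coboundary is `δf ∪ δf₁ ∪ ⋯ ∪ δfₖ`. -/
def cupPrimitive (f : V → ZMod 2) (fs : List (V → ZMod 2)) : List V → ZMod 2
  | [] => 0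
  | a :: l => f a * cup fs (a :: l)

lemma linearCombination_cupPrimitive_cone (f : V → ZMod 2) (fs : List (V → ZMod 2)) (a : V)
    (c : Mod2Chain V) :
    linearCombination (ZMod 2) (cupPrimitive f fs) (cone a c) =
      f a * linearCombination (ZMod 2) (cup fs) (cone a c) := by
  have h : linearCombination (ZMod 2) (cupPrimitive f fs) ∘ₗ cone a =
      f a • (linearCombination (ZMod 2) (cup fs) ∘ₗ cone a) :=
    linearMap_ext fun l => by simp [cone_single, cupPrimitive]
  simpa using LinearMap.congr_fun h c

lemma linearCombination_cupPrimitive_boundarySimplex (f : V → ZMod 2) {fs : List (V → ZMod 2)}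
    {l : List V} (hl : l.length = fs.length + 2)
    (hclosed : linearCombination (ZMod 2) (cup fs) (boundarySimplex l) = 0) :
    linearCombination (ZMod 2) (cupPrimitive f fs) (boundarySimplex l) = cup (f :: fs) l := by
  match l, hl with
  | a :: b :: t, _ =>
    rw [boundarySimplex, map_add, linearCombination_single, one_smul] at hclosed ⊢
    rw [linearCombination_cupPrimitive_cone, ← CharTwo.add_eq_zero.1 hclosed, cupPrimitive, cup]
    ring

lemma linearCombination_cup_boundarySimplex (fs : List (V → ZMod 2)) {l : List V}
    (hl : l.length = fs.length + 2) :
    linearCombination (ZMod 2) (cup fs) (boundarySimplex l) = 0 := by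
  induction fs generalizing l with
  | nil =>
    match l, hl with
    | [a, b], _ => simp [boundarySimplex, cone_single, cup, CharTwo.add_self_eq_zero]
  | cons f fs ih =>
    have hexact : linearCombination (ZMod 2) (cup (f :: fs)) (boundarySimplex l) =
        (linearCombination (ZMod 2) (cupPrimitive f fs) ∘ₗ boundary) (boundarySimplex l) := by
      refine map_eq_map_of_mem_chainsOn (fun l' hl' => ?_)
        (boundarySimplex_mem_chainsOn (X := Set.univ) ⟨hl, fun _ _ => mem_univ _⟩)
      rw [LinearMap.comp_apply, boundary_single,
        linearCombination_cupPrimitive_boundarySimplex f hl'.1 (ih hl'.1),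
        linearCombination_single, one_smul]
    rw [hexact, LinearMap.comp_apply, boundary_boundarySimplex, map_zero]

lemma linearCombination_cupPrimitive_boundary (f : V → ZMod 2) (fs : List (V → ZMod 2))
    {X : Set V} {c : Mod2Chain V} (hc : c ∈ chainsOn (simplicesIn (fs.length + 2) X)) :
    linearCombination (ZMod 2) (cupPrimitive f fs) (boundary c) =
      linearCombination (ZMod 2) (cup (f :: fs)) c := by
  refine map_eq_map_of_mem_chainsOn
    (S := linearCombination (ZMod 2) (cupPrimitive f fs) ∘ₗ boundary) (fun l hl => ?_) hc
  rw [LinearMap.comp_apply, boundary_single, linearCombination_single, one_smul,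
    linearCombination_cupPrimitive_boundarySimplex f hl.1
      (linearCombination_cup_boundarySimplex fs hl.1)]

lemma cup_eq_zero_of_constant {f : V → ZMod 2} {fs : List (V → ZMod 2)} (hf : f ∈ fs)
    {l : List V} {a : ZMod 2} (ha : ∀ v ∈ l, f v = a) : cup fs l = 0 := by
  induction fs generalizing l with
  | nil => simp at hf
  | cons g fs ih =>
    match l with
    | [] => rfl
    | [_] => rfl
    | u :: v :: t =>
      rw [cup]
      rcases List.mem_cons.1 hf with rfl | hf
      · rw [ha u (by simp), ha v (by simp), CharTwo.add_self_eq_zero, zero_mul]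
      · rw [ih hf fun w hw => ha w (List.mem_cons_of_mem _ hw), mul_zero]

end Cup

section Antipode

variable {V : Type*}

/-- The action of the antipodal map `v ↦ -v` on chains. -/
def antipode [Neg V] : Mod2Chain V →ₗ[ZMod 2] Mod2Chain V :=
  Finsupp.lmapDomain _ _ (List.map Neg.neg)

lemma antipode_single [Neg V] (l : List V) :
    antipode (single l 1) = (single (l.map Neg.neg) 1 : Mod2Chain V) := by
  simp [antipode]

lemma antipode_cone [Neg V] (b : V) (c : Mod2Chain V) :
    antipode (cone b c) = cone (-b) (antipode c) := by
  have h : antipode ∘ₗ cone b = cone (-b) ∘ₗ antipode :=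
    linearMap_ext fun l => by simp [antipode_single, cone_single]
  exact LinearMap.congr_fun h c

lemma antipode_antipode [InvolutiveNeg V] (c : Mod2Chain V) : antipode (antipode c) = c := by
  have h : (antipode ∘ₗ antipode : Mod2Chain V →ₗ[ZMod 2] Mod2Chain V) = LinearMap.id :=
    linearMap_ext fun l => by simp [antipode_single]
  exact LinearMap.congr_fun h c

lemma antipode_boundarySimplex [Neg V] (l : List V) :
    antipode (boundarySimplex l) = boundarySimplex (l.map Neg.neg) := by
  induction l with
  | nil => simp [boundarySimplex]
  | cons a l ih => simp [boundarySimplex, antipode_single, antipode_cone, ih]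

lemma antipode_boundary [Neg V] (c : Mod2Chain V) :
    antipode (boundary c) = boundary (antipode c) := by
  have h : (antipode ∘ₗ boundary : Mod2Chain V →ₗ[ZMod 2] Mod2Chain V) = boundary ∘ₗ antipode :=
    linearMap_ext fun l => by simp [antipode_single, boundary_single, antipode_boundarySimplex]
  exact LinearMap.congr_fun h c

lemma cup_map_neg [Neg V] {X : Set V} {fs : List (V → ZMod 2)}
    (hodd : ∀ f ∈ fs, ∀ x ∈ X, f (-x) = f x + 1) {l : List V} (hl : ∀ v ∈ l, v ∈ X) :
    cup fs (l.map Neg.neg) = cup fs l := by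
  induction fs generalizing l with
  | nil => rfl
  | cons f fs ih =>
    match l with
    | [] => rfl
    | [_] => rfl
    | a :: b :: t =>
      rw [List.forall_mem_cons] at hodd hl
      have htail : cup fs (-b :: t.map Neg.neg) = cup fs (b :: t) := ih hodd.2 hl.2
      rw [List.map_cons, List.map_cons, cup, cup, htail, hodd.1 a hl.1, hodd.1 b (hl.2 b (by simp)),
        add_add_add_comm, CharTwo.add_self_eq_zero, add_zero]

/-- A tower of chains in which `c k` looks like a `k`-dimensional hemisphere of a sphere `X`:
its boundary consists of the hemisphere `c (k - 1)` and its antipode. -/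
structure IsHemisphereTower [Neg V] (X : Set V) (n : ℕ) (c : ℕ → Mod2Chain V) : Prop where
  zero : ∃ v, c 0 = single [v] 1
  mem : ∀ k ≤ n, c k ∈ chainsOn (simplicesIn (k + 1) X)
  boundary_succ : ∀ k < n, boundary (c (k + 1)) = c k + antipode (c k)

lemma linearCombination_cupPrimitive_add_antipode [Neg V] {X : Set V} {f : V → ZMod 2}
    {fs : List (V → ZMod 2)} (hf : ∀ x ∈ X, f (-x) = f x + 1)
    (hodd : ∀ f ∈ fs, ∀ x ∈ X, f (-x) = f x + 1) {k : ℕ} {c : Mod2Chain V}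
    (hc : c ∈ chainsOn (simplicesIn (k + 1) X)) :
    linearCombination (ZMod 2) (cupPrimitive f fs) (c + antipode c) =
      linearCombination (ZMod 2) (cup fs) c := by
  refine map_eq_map_of_mem_chainsOn
    (S := linearCombination (ZMod 2) (cupPrimitive f fs) ∘ₗ (LinearMap.id + antipode))
    (fun l hl => ?_) hc
  simp only [LinearMap.comp_apply, LinearMap.add_apply, LinearMap.id_apply, map_add,
    antipode_single, linearCombination_single, one_smul]
  match l, hl with
  | a :: t, hl =>
    have hneg : cup fs (-a :: t.map Neg.neg) = cup fs (a :: t) := cup_map_neg hodd hl.2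
    rw [List.map_cons, cupPrimitive, cupPrimitive, hneg, hf a (hl.2 a (by simp)), add_mul,
      one_mul, ← add_assoc, CharTwo.add_self_eq_zero, zero_add]

lemma IsHemisphereTower.linearCombination_cup_eq_one [Neg V] {X : Set V} {n : ℕ}
    {c : ℕ → Mod2Chain V} (hc : IsHemisphereTower X n c) {fs : List (V → ZMod 2)}
    (hfs : fs.length ≤ n) (hodd : ∀ f ∈ fs, ∀ x ∈ X, f (-x) = f x + 1) :
    linearCombination (ZMod 2) (cup fs) (c fs.length) = 1 := by
  induction fs with
  | nil =>
    obtain ⟨v, hv⟩ := hc.zero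
    simp [hv, cup]
  | cons f fs ih =>
    rw [List.forall_mem_cons] at hodd
    have hlt : fs.length < n := hfs
    rw [List.length_cons, ← linearCombination_cupPrimitive_boundary f fs (hc.mem _ hlt),
      hc.boundary_succ _ hlt,
      linearCombination_cupPrimitive_add_antipode hodd.1 hodd.2 (hc.mem _ hlt.le), ih hlt.le hodd.2]

end Antipode

section Subdivision

variable {E : Type*} [AddCommGroup E] [Module ℝ E]

/-- The barycenter of the vertices of a simplex. -/
def barycenter (l : List E) : E := (l.length : ℝ)⁻¹ • l.sum

/-- The barycentric subdivision of chains whose simplices have `k` vertices. -/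
def subdivide : ℕ → Mod2Chain E →ₗ[ZMod 2] Mod2Chain E
  | 0 => LinearMap.id
  | k + 1 => linearCombination (ZMod 2) fun l =>
      cone (barycenter l) (subdivide k (boundarySimplex l))

lemma subdivide_succ_single (k : ℕ) (l : List E) :
    subdivide (k + 1) (single l 1) = cone (barycenter l) (subdivide k (boundarySimplex l)) := by
  simp [subdivide]

lemma boundary_subdivide (k : ℕ) (c : Mod2Chain E) :
    boundary (subdivide (k + 1) c) = subdivide k (boundary c) := by
  have hcycle (l : List E) : boundary (subdivide k (boundarySimplex l)) = 0 := by
    cases k with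
    | zero => exact boundary_boundarySimplex l
    | succ k => rw [boundary_subdivide k, boundary_boundarySimplex, map_zero]
  have h : (boundary ∘ₗ subdivide (k + 1) : Mod2Chain E →ₗ[ZMod 2] Mod2Chain E) =
      subdivide k ∘ₗ boundary :=
    linearMap_ext fun l => by
      rw [LinearMap.comp_apply, LinearMap.comp_apply, subdivide_succ_single, boundary_cone, hcycle,
        map_zero, add_zero, boundary_single]
  exact LinearMap.congr_fun h c

lemma barycenter_map_neg (l : List E) : barycenter (l.map Neg.neg) = -barycenter l := by
  have hsum : (l.map Neg.neg).sum = -l.sum := (map_list_sum (negAddMonoidHom : E →+ E) l).symm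
  rw [barycenter, barycenter, List.length_map, hsum, smul_neg]

lemma antipode_subdivide (k : ℕ) (c : Mod2Chain E) :
    antipode (subdivide k c) = subdivide k (antipode c) := by
  induction k generalizing c with
  | zero => rfl
  | succ k ih =>
    have h : (antipode ∘ₗ subdivide (k + 1) : Mod2Chain E →ₗ[ZMod 2] Mod2Chain E) =
        subdivide (k + 1) ∘ₗ antipode :=
      linearMap_ext fun l => by
        simp only [LinearMap.comp_apply, antipode_single, subdivide_succ_single, antipode_cone, ih,
          barycenter_map_neg, antipode_boundarySimplex]
    exact LinearMap.congr_fun h c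

lemma iterate_subdivide_single_singleton (v : E) (m : ℕ) :
    (subdivide 1)^[m] (single [v] 1) = (single [v] 1 : Mod2Chain E) := by
  refine Function.iterate_fixed ?_ m
  simp [boundarySimplex, subdivide, barycenter, cone_single]

lemma IsHemisphereTower.iterate_subdivide {X Y : Set E} {n : ℕ} {c : ℕ → Mod2Chain E}
    (hc : IsHemisphereTower X n c) {m : ℕ}
    (hY : ∀ k ≤ n, (subdivide (k + 1))^[m] (c k) ∈ chainsOn (simplicesIn (k + 1) Y)) :
    IsHemisphereTower Y n fun k => (subdivide (k + 1))^[m] (c k) where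
  zero := hc.zero.imp fun v hv => by simp only [hv, zero_add, iterate_subdivide_single_singleton]
  mem := hY
  boundary_succ k hk := by
    have hboundary : Function.Semiconj boundary (subdivide (k + 2)) (subdivide (E := E) (k + 1)) :=
      boundary_subdivide (k + 1)
    have hantipode : Function.Commute antipode (subdivide (E := E) (k + 1)) :=
      antipode_subdivide (k + 1)
    rw [(hboundary.iterate_right m).eq, hc.boundary_succ k hk, iterate_map_add,
      (hantipode.iterate_right m).eq]

lemma barycenter_mem_of_convex {F : Set E} (hF : Convex ℝ F) {l : List E} (hl : l ≠ [])
    (hlF : ∀ v ∈ l, v ∈ F) : barycenter l ∈ F := by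
  have hpos : (l.length : ℝ) ≠ 0 := by simpa using hl
  have hsum : barycenter l = ∑ i : Fin l.length, (l.length : ℝ)⁻¹ • l.get i := by
    rw [← Finset.smul_sum, barycenter]
    simp
  rw [hsum]
  exact hF.sum_mem (fun _ _ => by positivity) (by simp [hpos]) fun i _ => hlF _ (List.get_mem _ _)

end Subdivision

section FineSimplices

variable {X : Type*} [PseudoMetricSpace X]

/-- The simplices with `k` vertices in `F` at mutual distance at most `D`. -/
def fineSimplices (k : ℕ) (F : Set X) (D : ℝ) : Set (List X) :=
  {l ∈ simplicesIn k F | ∀ v ∈ l, ∀ w ∈ l, dist v w ≤ D}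

lemma cons_mem_fineSimplices {k : ℕ} {F : Set X} {D : ℝ} {l : List X} {b : X}
    (hl : l ∈ fineSimplices k F D) (hb : b ∈ F) (hD : 0 ≤ D) (hball : ∀ v ∈ l, dist v b ≤ D) :
    b :: l ∈ fineSimplices (k + 1) F D := by
  refine ⟨⟨congrArg (· + 1) hl.1.1, List.forall_mem_cons.2 ⟨hb, hl.1.2⟩⟩, ?_⟩
  simp only [List.forall_mem_cons, dist_self]
  exact ⟨⟨hD, fun v hv => dist_comm b v ▸ hball v hv⟩, fun v hv => ⟨hball v hv, hl.2 v hv⟩⟩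

lemma boundarySimplex_mem_chainsOn_fineSimplices {k : ℕ} {F : Set X} {D : ℝ} {l : List X}
    (hl : l ∈ fineSimplices (k + 1) F D) :
    boundarySimplex l ∈ chainsOn (fineSimplices k F D) := by
  refine Finsupp.supported_mono (fun l' hl' => ?_)
    (boundarySimplex_mem_chainsOn (X := {v | v ∈ l}) ⟨hl.1.1, fun _ => id⟩)
  exact ⟨⟨hl'.1, fun v hv => hl.1.2 v (hl'.2 v hv)⟩,
    fun v hv w hw => hl.2 v (hl'.2 v hv) w (hl'.2 w hw)⟩

end FineSimplices

section Mesh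

variable {E : Type*} [NormedAddCommGroup E] [NormedSpace ℝ E]

lemma norm_sum_sub_length_smul_le {l : List E} {v : E} {D : ℝ} (h : ∀ w ∈ l, dist w v ≤ D) :
    ‖l.sum - (l.length : ℝ) • v‖ ≤ l.length * D := by
  induction l with
  | nil => simp
  | cons a l ih =>
    rw [List.forall_mem_cons, dist_eq_norm] at h
    calc ‖(a :: l).sum - ((a :: l).length : ℝ) • v‖
        = ‖(a - v) + (l.sum - (l.length : ℝ) • v)‖ := by
          congr 1
          simp only [List.sum_cons, List.length_cons]
          push_cast
          module
      _ ≤ D + l.length * D := (norm_add_le _ _).trans (add_le_add h.1 (ih h.2))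
      _ = (a :: l).length * D := by
          push_cast [List.length_cons]
          ring

lemma dist_barycenter_le {l : List E} {k : ℕ} (hl : l.length = k + 1) {D : ℝ}
    (hD : ∀ u ∈ l, ∀ w ∈ l, dist u w ≤ D) {v : E} (hv : v ∈ l) :
    dist v (barycenter l) ≤ k / (k + 1) * D := by
  classical
  have hsum : l.sum = v + (l.erase v).sum := by
    rw [(List.perm_cons_erase hv).sum_eq, List.sum_cons]
  have hlen : (l.erase v).length = k := by rw [List.length_erase_of_mem hv, hl, k.add_sub_cancel]
  have hothers : ‖(l.erase v).sum - (k : ℝ) • v‖ ≤ k * D := by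
    simpa only [hlen] using
      norm_sum_sub_length_smul_le (l := l.erase v) fun w hw => hD w (List.mem_of_mem_erase hw) v hv
  have hdiff : barycenter l - v = ((k : ℝ) + 1)⁻¹ • ((l.erase v).sum - (k : ℝ) • v) := by
    rw [barycenter, hl, hsum]
    push_cast
    match_scalars <;> field_simp
    ring
  calc dist v (barycenter l) = ((k : ℝ) + 1)⁻¹ * ‖(l.erase v).sum - (k : ℝ) • v‖ := by
        rw [dist_comm, dist_eq_norm, hdiff, norm_smul, Real.norm_of_nonneg (by positivity)]
    _ ≤ ((k : ℝ) + 1)⁻¹ * (k * D) := by gcongr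
    _ = k / (k + 1) * D := by ring

-- The convex set varies in the induction: the faces of a simplex subdivide inside the original
-- convex set as well as inside a small ball around the barycenter.
lemma subdivide_single_mem_chainsOn {n k : ℕ} (hk : k ≤ n + 1) {F : Set E} (hF : Convex ℝ F)
    {D : ℝ} (hD : 0 ≤ D) {l : List E} (hl : l ∈ fineSimplices k F D) :
    subdivide k (single l 1) ∈ chainsOn (fineSimplices k F (n / (n + 1) * D)) := by
  induction k generalizing F l with
  | zero =>
    refine single_mem_chainsOn ⟨hl.1, ?_⟩
    simp [List.length_eq_zero_iff.1 hl.1.1]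
  | succ k ih =>
    have hfaces {G : Set E} (hG : Convex ℝ G) (hlG : ∀ v ∈ l, v ∈ G) :
        subdivide k (boundarySimplex l) ∈ chainsOn (fineSimplices k G (n / (n + 1) * D)) :=
      map_mem_of_mem_chainsOn (fun l' hl' => ih (by omega) hG hl')
        (boundarySimplex_mem_chainsOn_fineSimplices ⟨⟨hl.1.1, hlG⟩, hl.2⟩)
    have hball : ∀ v ∈ l, v ∈ closedBall (barycenter l) (n / (n + 1) * D) := fun v hv => by
      have hkn : (k : ℝ) ≤ n := by exact_mod_cast Nat.le_of_succ_le_succ hk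
      refine (dist_barycenter_le hl.1.1 hl.2 hv).trans (mul_le_mul_of_nonneg_right ?_ hD)
      rw [div_le_div_iff₀ (by positivity) (by positivity)]
      linarith
    have hboth := Submodule.mem_inf.2 ⟨hfaces hF hl.1.2, hfaces (convex_closedBall _ _) hball⟩
    rw [← Finsupp.supported_inter] at hboth
    have hne : l ≠ [] := List.ne_nil_of_length_eq_add_one hl.1.1
    rw [subdivide_succ_single]
    exact cone_mem_chainsOn (fun l' hl' => cons_mem_fineSimplices hl'.1
      (barycenter_mem_of_convex hF hne hl.1.2) (by positivity) hl'.2.1.2) hboth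

lemma iterate_subdivide_mem_chainsOn {n k : ℕ} (hk : k ≤ n + 1) {𝓕 : Set (Set E)}
    (h𝓕 : ∀ F ∈ 𝓕, Convex ℝ F) {D : ℝ} (hD : 0 ≤ D) {c : Mod2Chain E}
    (hc : c ∈ chainsOn (⋃ F ∈ 𝓕, fineSimplices k F D)) (m : ℕ) :
    (subdivide k)^[m] c ∈ chainsOn (⋃ F ∈ 𝓕, fineSimplices k F ((n / (n + 1) : ℝ) ^ m * D)) := by
  induction m with
  | zero => simpa using hc
  | succ m ih =>
    rw [Function.iterate_succ_apply']
    refine map_mem_of_mem_chainsOn (fun l hl => ?_) ih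
    obtain ⟨F, hF, hlF⟩ := mem_iUnion₂.1 hl
    rw [pow_succ', mul_assoc]
    exact Finsupp.supported_mono (subset_biUnion_of_mem hF)
      (subdivide_single_mem_chainsOn hk (h𝓕 F hF) (by positivity) hlF)

end Mesh

section Hemisphere

variable {V : Type*}

/-- The standard tower of hemispheres in the boundary of the cross-polytope with vertices `± e i`:
the next hemisphere is the cone with apex `e (k + 1)` over the sphere formed by `hemisphere e k` and
its antipode. -/
def hemisphere [Neg V] (e : ℕ → V) : ℕ → Mod2Chain V
  | 0 => single [e 0] 1
  | k + 1 => cone (e (k + 1)) (hemisphere e k + antipode (hemisphere e k))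

lemma boundary_hemisphere_succ [InvolutiveNeg V] (e : ℕ → V) (k : ℕ) :
    boundary (hemisphere e (k + 1)) = hemisphere e k + antipode (hemisphere e k) := by
  have hcycle : boundary (hemisphere e k + antipode (hemisphere e k)) = 0 := by
    cases k with
    | zero => simp [hemisphere, antipode_single, boundary_single, boundarySimplex, add_self]
    | succ k =>
      rw [map_add, ← antipode_boundary, boundary_hemisphere_succ e k, map_add, antipode_antipode,
        add_comm (antipode _), add_self]
  rw [hemisphere, boundary_cone, hcycle, map_zero, add_zero]

variable {E : Type*} [AddCommGroup E] [Module ℝ E]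

/-- The simplices with `k + 1` vertices in the facet of the cross-polytope spanned by the vectors
`σ i • e i`, where `σ` is a choice of signs. -/
def crossPolytopeSimplices (e : ℕ → E) (k : ℕ) (σ : ℕ → ℝ) : Set (List E) :=
  simplicesIn (k + 1) ((fun i => σ i • e i) '' Iic k)

lemma antipode_mem_chainsOn_crossPolytopeSimplices {e : ℕ → E} {k : ℕ} {c : Mod2Chain E}
    (hc : c ∈ chainsOn (⋃ σ ∈ {σ : ℕ → ℝ | ∀ i, |σ i| = 1}, crossPolytopeSimplices e k σ)) :
    antipode c ∈ chainsOn (⋃ σ ∈ {σ : ℕ → ℝ | ∀ i, |σ i| = 1}, crossPolytopeSimplices e k σ) := by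
  refine map_mem_of_mem_chainsOn (fun l hl => ?_) hc
  obtain ⟨σ, hσ, hlen, hlσ⟩ := mem_iUnion₂.1 hl
  rw [antipode_single]
  refine single_mem_chainsOn (mem_iUnion₂.2 ⟨-σ, fun i => by simp [hσ i], by simp [hlen], ?_⟩)
  intro v hv
  obtain ⟨w, hw, rfl⟩ := List.mem_map.1 hv
  obtain ⟨i, hi, rfl⟩ := hlσ w hw
  exact ⟨i, hi, by simp⟩

lemma cons_mem_crossPolytopeSimplices {e : ℕ → E} {k : ℕ} {σ : ℕ → ℝ} {l : List E}
    (hl : l ∈ crossPolytopeSimplices e k σ) :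
    e (k + 1) :: l ∈ crossPolytopeSimplices e (k + 1) (Function.update σ (k + 1) 1) := by
  refine ⟨congrArg (· + 1) hl.1, List.forall_mem_cons.2 ⟨⟨k + 1, mem_Iic.2 le_rfl, by simp⟩, ?_⟩⟩
  intro v hv
  obtain ⟨i, hi, rfl⟩ := hl.2 v hv
  have hik : i ≤ k := hi
  exact ⟨i, hik.trans k.le_succ, by simp [Function.update_of_ne (show i ≠ k + 1 by omega)]⟩

lemma hemisphere_mem_chainsOn (e : ℕ → E) (k : ℕ) :
    hemisphere e k ∈
      chainsOn (⋃ σ ∈ {σ : ℕ → ℝ | ∀ i, |σ i| = 1}, crossPolytopeSimplices e k σ) := by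
  induction k with
  | zero =>
    refine single_mem_chainsOn (mem_iUnion₂.2 ⟨1, fun _ => abs_one, rfl, ?_⟩)
    simp
  | succ k ih =>
    refine cone_mem_chainsOn (fun l hl => ?_)
      (add_mem ih (antipode_mem_chainsOn_crossPolytopeSimplices ih))
    obtain ⟨σ, hσ, hlσ⟩ := mem_iUnion₂.1 hl
    refine mem_iUnion₂.2 ⟨_, fun i => ?_, cons_mem_crossPolytopeSimplices hlσ⟩
    by_cases hi : i = k + 1
    · simp [hi]
    · simpa [hi] using hσ i

end Hemisphere

end Mod2Chain

section CrossPolytope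

open Mod2Chain

variable {ι : Type*} [Fintype ι]

/-- The facet of the unit sphere of `ℓ¹` lying in the orthant with signs `σ`. -/
def orthantFacet (σ : ι → ℝ) : Set (PiLp 1 fun _ : ι => ℝ) :=
  {x | (∀ i, 0 ≤ σ i * x i) ∧ ∑ i, σ i * x i = 1}

lemma convex_orthantFacet (σ : ι → ℝ) : Convex ℝ (orthantFacet σ) := by
  intro x hx y hy a b ha hb hab
  have hcoord (i : ι) : σ i * (a • x + b • y) i = a * (σ i * x i) + b * (σ i * y i) := by
    simp only [PiLp.add_apply, PiLp.smul_apply, smul_eq_mul]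
    ring
  refine ⟨fun i => ?_, ?_⟩
  · rw [hcoord]
    exact add_nonneg (mul_nonneg ha (hx.1 i)) (mul_nonneg hb (hy.1 i))
  · simp only [hcoord, Finset.sum_add_distrib, ← Finset.mul_sum, hx.2, hy.2, mul_one, hab]

lemma orthantFacet_subset_sphere {σ : ι → ℝ} (hσ : ∀ i, |σ i| = 1) :
    orthantFacet σ ⊆ sphere 0 1 := by
  intro x hx
  rw [mem_sphere_zero_iff_norm, PiLp.norm_eq_of_L1, ← hx.2]
  refine Finset.sum_congr rfl fun i _ => ?_
  rw [← abs_of_nonneg (hx.1 i), abs_mul, hσ, one_mul, Real.norm_eq_abs]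

lemma smul_single_mem_orthantFacet [DecidableEq ι] {σ : ι → ℝ} {i : ι} (hσ : |σ i| = 1) :
    σ i • PiLp.single 1 i 1 ∈ orthantFacet σ := by
  have hsq : σ i * σ i = 1 := by rw [← abs_mul_abs_self, hσ, one_mul]
  have hcoord (j : ι) : σ j * (σ i • PiLp.single 1 i 1 : PiLp 1 fun _ : ι => ℝ) j =
      if j = i then 1 else 0 := by
    obtain rfl | hj := eq_or_ne j i
    · simp [hsq]
    · simp [hj]
  refine ⟨fun j => ?_, by simp only [hcoord, Finset.sum_ite_eq', Finset.mem_univ, if_true]⟩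
  rw [hcoord]
  split_ifs <;> norm_num

/-- The standard basis of `ℝⁿ⁺¹`, extended periodically to a sequence indexed by `ℕ`. -/
def basisVector (n k : ℕ) : PiLp 1 fun _ : Fin (n + 1) => ℝ :=
  PiLp.single 1 (Fin.ofNat (n + 1) k) 1

lemma crossPolytopeSimplices_basisVector_subset {n k : ℕ} (hk : k ≤ n) {σ : ℕ → ℝ}
    (hσ : ∀ i, |σ i| = 1) :
    crossPolytopeSimplices (basisVector n) k σ ⊆
      fineSimplices (k + 1) (orthantFacet fun i : Fin (n + 1) => σ i) 2 := by
  intro l hl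
  have hfacet : ∀ v ∈ l, v ∈ orthantFacet fun i : Fin (n + 1) => σ i := fun v hv => by
    obtain ⟨i, hi, rfl⟩ := hl.2 v hv
    have hin : i % (n + 1) = i := Nat.mod_eq_of_lt (Nat.lt_succ_of_le (le_trans hi hk))
    simpa [hin, basisVector] using smul_single_mem_orthantFacet (σ := fun i : Fin (n + 1) => σ i)
      (i := Fin.ofNat (n + 1) i) (hσ _)
  have hnorm : ∀ v ∈ l, ‖v‖ = 1 := fun v hv =>
    mem_sphere_zero_iff_norm.1 (orthantFacet_subset_sphere (fun _ => hσ _) (hfacet v hv))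
  refine ⟨⟨hl.1, hfacet⟩, fun v hv w hw => (dist_le_norm_add_norm v w).trans ?_⟩
  rw [hnorm v hv, hnorm w hw, one_add_one_eq_two]

lemma exists_isHemisphereTower_mem_fineSimplices (n : ℕ) {δ : ℝ} (hδ : 0 < δ) :
    ∃ c, IsHemisphereTower (sphere (0 : PiLp 1 fun _ : Fin (n + 1) => ℝ) 1) n c ∧
      c n ∈ chainsOn (fineSimplices (n + 1) (sphere 0 1) δ) := by
  obtain ⟨m, hm⟩ : ∃ m : ℕ, (n / (n + 1) : ℝ) ^ m < δ / 2 :=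
    exists_pow_lt_of_lt_one (by positivity) ((div_lt_one (by positivity)).2 (by linarith))
  let facets : Set (Set (PiLp 1 fun _ : Fin (n + 1) => ℝ)) :=
    {F | ∃ σ : ℕ → ℝ, (∀ i, |σ i| = 1) ∧ F = orthantFacet fun i : Fin (n + 1) => σ i}
  have hconvex : ∀ F ∈ facets, Convex ℝ F := by
    rintro _ ⟨σ, -, rfl⟩
    exact convex_orthantFacet _
  have hsphere : ∀ F ∈ facets, F ⊆ sphere 0 1 := by
    rintro _ ⟨σ, hσ, rfl⟩
    exact orthantFacet_subset_sphere fun i => hσ i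
  have hstart (k : ℕ) (hk : k ≤ n) : hemisphere (basisVector n) k ∈
      chainsOn (⋃ F ∈ facets, fineSimplices (k + 1) F 2) := by
    refine Finsupp.supported_mono (iUnion₂_subset fun σ hσ => ?_) (hemisphere_mem_chainsOn _ k)
    exact (crossPolytopeSimplices_basisVector_subset hk hσ).trans
      (subset_biUnion_of_mem (u := fun F => fineSimplices (k + 1) F 2) ⟨σ, hσ, rfl⟩)
  have hfine (k : ℕ) (hk : k ≤ n) : (subdivide (k + 1))^[m] (hemisphere (basisVector n) k) ∈
      chainsOn (fineSimplices (k + 1) (sphere 0 1) δ) := by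
    refine Finsupp.supported_mono (iUnion₂_subset fun F hF l hl => ?_)
      (iterate_subdivide_mem_chainsOn (Nat.succ_le_succ hk) hconvex zero_le_two (hstart k hk) m)
    exact ⟨⟨hl.1.1, fun v hv => hsphere F hF (hl.1.2 v hv)⟩,
      fun v hv w hw => (hl.2 v hv w hw).trans (by linarith)⟩
  have htower : IsHemisphereTower univ n (hemisphere (basisVector n)) :=
    { zero := ⟨_, rfl⟩
      mem := fun k hk => by
        refine Finsupp.supported_mono (iUnion₂_subset fun F _ l hl => ?_) (hstart k hk)
        exact ⟨hl.1.1, fun _ _ => mem_univ _⟩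
      boundary_succ := fun k _ => boundary_hemisphere_succ _ k }
  exact ⟨_, htower.iterate_subdivide fun k hk =>
    Finsupp.supported_mono (fun _ hl => hl.1) (hfine k hk), hfine n le_rfl⟩

-- If every small simplex had a constant `s j`, then the cup product of the `δ(s j)`, which
-- evaluates to `1` on the top hemisphere, would vanish on each of its simplices.
theorem exists_small_set_forall_not_constant {n : ℕ}
    {s : Fin n → sphere (0 : PiLp 1 fun _ : Fin (n + 1) => ℝ) 1 → ZMod 2}
    (hs : ∀ j x, s j (-x) = s j x + 1) {δ : ℝ} (hδ : 0 < δ) :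
    ∃ A : Set (sphere (0 : PiLp 1 fun _ : Fin (n + 1) => ℝ) 1), A.Nonempty ∧
      (∀ x ∈ A, ∀ y ∈ A, dist x y ≤ δ) ∧ ∀ j a, ¬∀ x ∈ A, s j x = a := by
  by_contra! hcon
  obtain ⟨c, hc, hfine⟩ := exists_isHemisphereTower_mem_fineSimplices n hδ
  let fs := List.ofFn fun j => Function.extend Subtype.val (s j) 0
  have hlen : fs.length = n := List.length_ofFn
  have hodd : ∀ f ∈ fs, ∀ x ∈ sphere (0 : PiLp 1 fun _ : Fin (n + 1) => ℝ) 1,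
      f (-x) = f x + 1 := by
    intro f hf x hx
    obtain ⟨j, rfl⟩ := (List.mem_ofFn' _ _).1 hf
    have hext := Subtype.val_injective.extend_apply (s j) 0
    exact (hext (-⟨x, hx⟩)).trans ((hs j _).trans (congrArg (· + 1) (hext ⟨x, hx⟩).symm))
  have hvanish : linearCombination (ZMod 2) (cup fs) (c n) ∈ (⊥ : Submodule (ZMod 2) (ZMod 2)) := by
    refine map_mem_of_mem_chainsOn (fun l hl => ?_) hfine
    have hsphere (v) (hv : v ∈ l) : v ∈ sphere (0 : PiLp 1 fun _ : Fin (n + 1) => ℝ) 1 :=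
      hl.1.2 v hv
    obtain ⟨v, hv⟩ := List.exists_mem_of_length_pos (n.succ_pos.trans_eq hl.1.1.symm)
    obtain ⟨j, a, hja⟩ := hcon {x | (x : PiLp 1 fun _ : Fin (n + 1) => ℝ) ∈ l}
      ⟨⟨v, hsphere v hv⟩, hv⟩ fun x hx y hy => hl.2 x hx y hy
    rw [linearCombination_single, one_smul, Submodule.mem_bot]
    refine cup_eq_zero_of_constant ((List.mem_ofFn' _ _).2 ⟨j, rfl⟩) (a := a) fun w hw => ?_
    exact (Subtype.val_injective.extend_apply (s j) 0 ⟨w, hsphere w hw⟩).trans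
      (hja ⟨w, hsphere w hw⟩ hw)
  have hone := hc.linearCombination_cup_eq_one hlen.le hodd
  rw [hlen, (Submodule.mem_bot _).1 hvanish] at hone
  exact zero_ne_one hone

end CrossPolytope

section LusternikSchnirelmann

lemma exists_odd_eq_one_on {X : Type*} [InvolutiveNeg X] (hfree : ∀ x : X, x ≠ -x) {B : Set X}
    (hB : Disjoint B (-B)) :
    ∃ t : X → ZMod 2, (∀ x, t (-x) = t x + 1) ∧ ∀ x ∈ B, t x = 1 := by
  classical
  have hdisj {x : X} (hx : x ∈ B) : -x ∉ B := fun hx' => hB.le_bot ⟨hx, hx'⟩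
  let P : X → Prop := fun x => x ∈ B ∨ -x ∉ B ∧ WellOrderingRel x (-x)
  have hP (x : X) : P (-x) ↔ ¬P x := by
    have hrel : WellOrderingRel (-x) x ↔ ¬WellOrderingRel x (-x) :=
      ⟨fun h h' => asymm_of WellOrderingRel h h', fun h =>
        ((trichotomous_of WellOrderingRel x (-x)).resolve_left h).resolve_left (hfree x)⟩
    have hx := @hdisj x
    simp only [P, neg_neg, hrel]
    tauto
  refine ⟨fun x => if P x then 1 else 0, fun x => ?_, fun x hx => if_pos (Or.inl hx)⟩
  by_cases hx : P x
  · simp [hP, hx, CharTwo.add_self_eq_zero]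
  · simp [hP, hx]

lemma lusternik_schnirelmann_l1_sphere {n : ℕ}
    {B : Fin n → Set (sphere (0 : PiLp 1 fun _ : Fin (n + 1) => ℝ) 1)} (hB : ∀ j, IsOpen (B j))
    (hdisj : ∀ j, Disjoint (B j) (-B j)) : ∃ w, ∀ j, w ∉ B j ∪ -B j := by
  by_contra! hcover
  choose s hs hsB using fun j => exists_odd_eq_one_on (ne_neg_of_mem_unit_sphere ℝ) (hdisj j)
  obtain ⟨δ, hδ, hleb⟩ := lebesgue_number_lemma_of_metric isCompact_univ
    (c := Sum.elim B fun j => -B j) (Sum.forall.2 ⟨hB, fun j => (hB j).neg⟩) fun w _ => by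
      obtain ⟨j, hj | hj⟩ := hcover w
      exacts [mem_iUnion.2 ⟨Sum.inl j, hj⟩, mem_iUnion.2 ⟨Sum.inr j, hj⟩]
  obtain ⟨A, ⟨x, hx⟩, hdiam, hA⟩ := exists_small_set_forall_not_constant hs (half_pos hδ)
  have hball : ∀ y ∈ A, y ∈ ball x δ := fun y hy => (hdiam y hy x hx).trans_lt (half_lt_self hδ)
  obtain ⟨j | j, hj⟩ := hleb x (mem_univ x)
  · exact hA j 1 fun y hy => hsB j y (hj (hball y hy))
  · refine hA j 0 fun y hy => ?_
    have hone : s j y + 1 = 1 := hs j y ▸ hsB j (-y) (hj (hball y hy))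
    simpa using hone

lemma exists_continuous_odd_map_unit_sphere {E F : Type*} [NormedAddCommGroup E] [NormedSpace ℝ E]
    [NormedAddCommGroup F] [NormedSpace ℝ F] {L : E →L[ℝ] F} (hL : Function.Injective L) :
    ∃ φ : sphere (0 : E) 1 → sphere (0 : F) 1, Continuous φ ∧ ∀ x, φ (-x) = -φ x := by
  have hne (x : sphere (0 : E) 1) : ‖L x‖ ≠ 0 := by
    rw [norm_ne_zero_iff, map_ne_zero_iff L hL]
    exact ne_zero_of_mem_unit_sphere x
  refine ⟨fun x => ⟨‖L x‖⁻¹ • L x, ?_⟩, ?_, fun x => ?_⟩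
  · rw [mem_sphere_zero_iff_norm, norm_smul, norm_inv, norm_norm, inv_mul_cancel₀ (hne x)]
  · have hLval : Continuous fun x : sphere (0 : E) 1 => L x :=
      L.continuous.comp continuous_subtype_val
    exact ((hLval.norm.inv₀ hne).smul hLval).subtype_mk _
  · ext
    simp

theorem lusternik_schnirelmann_unit_sphere {E : Type*} [NormedAddCommGroup E] [NormedSpace ℝ E]
    {n : ℕ} (hn : ((n + 1 : ℕ) : Cardinal) ≤ Module.rank ℝ E) {B : Fin n → Set (sphere (0 : E) 1)}
    (hB : ∀ j, IsOpen (B j)) (hdisj : ∀ j, Disjoint (B j) (-B j)) :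
    ∃ w, ∀ j, w ∉ B j ∪ -B j := by
  obtain ⟨L, hL⟩ := Module.le_rank_iff_exists_linearMap.1 hn
  let L' : (PiLp 1 fun _ : Fin (n + 1) => ℝ) →L[ℝ] E :=
    LinearMap.toContinuousLinearMap (L ∘ₗ (WithLp.linearEquiv 1 ℝ (Fin (n + 1) → ℝ)).toLinearMap)
  obtain ⟨φ, hφ, hodd⟩ := exists_continuous_odd_map_unit_sphere (L := L')
    (hL.comp (WithLp.linearEquiv 1 ℝ (Fin (n + 1) → ℝ)).injective)
  have hneg (j : Fin n) : -(φ ⁻¹' B j) = φ ⁻¹' (-B j) := by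
    ext x
    simp only [Set.mem_neg, mem_preimage, hodd]
  obtain ⟨w, hw⟩ := lusternik_schnirelmann_l1_sphere (B := fun j => φ ⁻¹' B j)
    (fun j => (hB j).preimage hφ) fun j => hneg j ▸ (hdisj j).preimage φ
  exact ⟨φ w, fun j hj => hw j (hneg j ▸ hj)⟩

end LusternikSchnirelmann

section Eilenberg

open Filter Topology

variable {X : Type*} [EMetricSpace X]

/-- The `d`-dimensional size of the part of a cover `t` that meets the level set `f = r`. The
closure makes it measurable in `r`. -/
def levelSetCoverSum (f : X → ℝ) (d : ℝ) (t : ℕ → Set X) (r : ℝ) : ℝ≥0∞ :=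
  ∑' i, (closure (f '' t i)).indicator (fun _ => ediam (t i) ^ d) r

lemma measurable_levelSetCoverSum (f : X → ℝ) (d : ℝ) (t : ℕ → Set X) :
    Measurable (levelSetCoverSum f d t) :=
  Measurable.tsum fun _ => measurable_const.indicator isClosed_closure.measurableSet

lemma lintegral_levelSetCoverSum_le {f : X → ℝ} (hf : LipschitzWith 1 f) {d : ℝ} (hd : 0 ≤ d)
    (t : ℕ → Set X) :
    ∫⁻ r, levelSetCoverSum f d t r ≤ ∑' i, ⨆ _ : (t i).Nonempty, ediam (t i) ^ (d + 1) := by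
  have hmeas (i : ℕ) : MeasurableSet (closure (f '' t i)) := isClosed_closure.measurableSet
  simp only [levelSetCoverSum]
  rw [lintegral_tsum fun i => (measurable_const.indicator (hmeas i)).aemeasurable]
  refine ENNReal.tsum_le_tsum fun i => ?_
  rw [lintegral_indicator_const (hmeas i)]
  obtain hempty | hne := (t i).eq_empty_or_nonempty
  · simp [hempty]
  have hvol : volume (closure (f '' t i)) ≤ ediam (t i) := by
    refine (Real.volume_le_diam _).trans ?_
    rw [Metric.ediam_closure]
    simpa using hf.ediam_image_le (t i)
  rw [iSup_pos hne, ENNReal.rpow_add_of_nonneg d 1 hd zero_le_one, ENNReal.rpow_one]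
  gcongr

variable [MeasurableSpace X] [BorelSpace X]

lemma exists_cover_tsum_ediam_rpow_le {d : ℝ} {A : Set X} (hA : μH[d] A ≠ ∞) {ρ : ℝ≥0∞}
    (hρ : 0 < ρ) :
    ∃ t : ℕ → Set X, A ⊆ ⋃ i, t i ∧ (∀ i, ediam (t i) ≤ ρ) ∧
      ∑' i, ⨆ _ : (t i).Nonempty, ediam (t i) ^ d ≤ μH[d] A + ρ := by
  have hle : (⨅ (t : ℕ → Set X) (_ : A ⊆ ⋃ i, t i) (_ : ∀ i, ediam (t i) ≤ ρ),
      ∑' i, ⨆ _ : (t i).Nonempty, ediam (t i) ^ d) ≤ μH[d] A := by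
    rw [Measure.hausdorffMeasure_apply]
    exact le_iSup₂ (f := fun (ρ : ℝ≥0∞) (_ : 0 < ρ) => ⨅ (t : ℕ → Set X) (_ : A ⊆ ⋃ i, t i)
      (_ : ∀ i, ediam (t i) ≤ ρ), ∑' i, ⨆ _ : (t i).Nonempty, ediam (t i) ^ d) ρ hρ
  have hlt := hle.trans_lt (ENNReal.lt_add_right hA hρ.ne')
  simp only [iInf_lt_iff] at hlt
  obtain ⟨t, hcover, hdiam, hsum⟩ := hlt
  exact ⟨t, hcover, hdiam, hsum.le⟩

lemma hausdorffMeasure_inter_preimage_le_liminf {f : X → ℝ} {d : ℝ} {A : Set X} {ρ : ℕ → ℝ≥0∞}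
    (hρ : Tendsto ρ atTop (𝓝 0)) {t : ℕ → ℕ → Set X} (hcover : ∀ k, A ⊆ ⋃ i, t k i)
    (hdiam : ∀ k i, ediam (t k i) ≤ ρ k) (r : ℝ) :
    μH[d] (A ∩ f ⁻¹' {r}) ≤ liminf (fun k => levelSetCoverSum f d (t k) r) atTop := by
  let meeting (k : ℕ) : Set ℕ := {i | (t k i ∩ f ⁻¹' {r}).Nonempty}
  refine (Measure.hausdorffMeasure_le_liminf_tsum (ι := fun k => meeting k) d (A ∩ f ⁻¹' {r}) ρ hρ
    (fun k i => t k i) (Eventually.of_forall fun k i => hdiam k i)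
    (Eventually.of_forall fun k y hy => ?_)).trans
    (liminf_le_liminf (Eventually.of_forall fun k => ?_))
  · obtain ⟨i, hi⟩ := mem_iUnion.1 (hcover k hy.1)
    exact mem_iUnion.2 ⟨⟨i, y, hi, hy.2⟩, hi⟩
  · rw [tsum_subtype (meeting k) fun i => ediam (t k i) ^ d]
    refine ENNReal.tsum_le_tsum fun i => ?_
    by_cases hi : i ∈ meeting k
    · obtain ⟨y, hy, hyr⟩ := id hi
      have hr : r ∈ f '' t k i := ⟨y, hy, hyr⟩
      rw [indicator_of_mem hi, indicator_of_mem (subset_closure hr)]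
    · exact (indicator_of_notMem hi _).trans_le zero_le

/-- Eilenberg's inequality, phrased with a measurable majorant because the measures of the level
sets need not depend measurably on the level. -/
theorem exists_measurable_hausdorffMeasure_inter_preimage_le {f : X → ℝ} (hf : LipschitzWith 1 f)
    {d : ℝ} (hd : 0 ≤ d) (A : Set X) :
    ∃ g : ℝ → ℝ≥0∞, Measurable g ∧ (∀ r, μH[d] (A ∩ f ⁻¹' {r}) ≤ g r) ∧
      ∫⁻ r, g r ≤ μH[d + 1] A := by
  by_cases hA : μH[d + 1] A = ∞
  · exact ⟨fun _ => ∞, measurable_const, fun _ => le_top, le_top.trans_eq hA.symm⟩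
  obtain ⟨ρ, -, hρpos, hρ⟩ := exists_seq_strictAnti_tendsto' (zero_lt_one (α := ℝ≥0∞))
  choose t hcover hdiam hsum using fun k => exists_cover_tsum_ediam_rpow_le hA (hρpos k).1
  have hmeas (k : ℕ) : Measurable (levelSetCoverSum f d (t k)) := measurable_levelSetCoverSum f d _
  refine ⟨fun r => liminf (fun k => levelSetCoverSum f d (t k) r) atTop, Measurable.liminf hmeas,
    hausdorffMeasure_inter_preimage_le_liminf hρ hcover hdiam, ?_⟩
  have hlim : Tendsto (fun k => μH[d + 1] A + ρ k) atTop (𝓝 (μH[d + 1] A)) := by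
    simpa using hρ.const_add (μH[d + 1] A)
  calc ∫⁻ r, liminf (fun k => levelSetCoverSum f d (t k) r) atTop
      ≤ liminf (fun k => ∫⁻ r, levelSetCoverSum f d (t k) r) atTop := lintegral_liminf_le hmeas
    _ ≤ liminf (fun k => μH[d + 1] A + ρ k) atTop := liminf_le_liminf <|
        Eventually.of_forall fun k => (lintegral_levelSetCoverSum_le hf hd (t k)).trans (hsum k)
    _ = μH[d + 1] A := hlim.liminf_eq

lemma exists_hausdorffMeasure_inter_preimage_le {f : X → ℝ} (hf : LipschitzWith 1 f) {d : ℝ}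
    (hd : 0 ≤ d) (A : Set X) {a b : ℝ} (hab : a < b) :
    ∃ r ∈ Ioo a b, μH[d] (A ∩ f ⁻¹' {r}) ≤ μH[d + 1] A / ENNReal.ofReal (b - a) := by
  obtain ⟨g, hgmeas, hgA, hgint⟩ := exists_measurable_hausdorffMeasure_inter_preimage_le hf hd A
  have hvol : volume (Ioo a b) = ENNReal.ofReal (b - a) := Real.volume_Ioo
  obtain ⟨r, hr, hgr⟩ := exists_le_setLAverage (μ := volume) (s := Ioo a b)
    (by simpa [hvol] using hab) (by simp [hvol]) hgmeas.aemeasurable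
  refine ⟨r, hr, (hgA r).trans (hgr.trans ?_)⟩
  rw [setLAverage_eq, hvol]
  gcongr
  exact (setLIntegral_le_lintegral _ _).trans hgint

end Eilenberg

section BallLayers

variable {M : Type*}

/-- Pairwise disjoint open sets `V a`, each contained in the ball of radius `R` around its
index `a`. -/
structure IsBallLayer [PseudoMetricSpace M] (R : ℝ) (V : M → Set M) : Prop where
  isOpen : ∀ a, IsOpen (V a)
  disjoint : ∀ a b, a ≠ b → Disjoint (V a) (V b)
  subset_ball : ∀ a, V a ⊆ ball a R

/-- The family obtained from `V` by cutting along the sphere of radius `r` around `x` and assigning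
the whole inside to `x`. -/
def insertBall [PseudoMetricSpace M] (V : M → Set M) (x : M) (r : ℝ) (a : M) : Set M :=
  (V a \ closedBall x r) ∪ {y | a = x ∧ y ∈ ball x r}

section PseudoMetric

variable [PseudoMetricSpace M] {R r : ℝ} {V : M → Set M}

lemma isBallLayer_empty (R : ℝ) : IsBallLayer R fun _ : M => ∅ :=
  ⟨fun _ => isOpen_empty, fun _ _ _ => disjoint_bot_left, fun _ => empty_subset _⟩

lemma IsBallLayer.mono (hV : IsBallLayer r V) (hr : r ≤ R) : IsBallLayer R V :=
  ⟨hV.isOpen, hV.disjoint, fun a => (hV.subset_ball a).trans (ball_subset_ball hr)⟩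

lemma IsBallLayer.insertBall (hV : IsBallLayer R V) (x : M) (hr : r ≤ R) :
    IsBallLayer R (insertBall V x r) where
  isOpen a := ((hV.isOpen a).sdiff isClosed_closedBall).union (isOpen_const.and isOpen_ball)
  disjoint a b hab := by
    refine Set.disjoint_left.2 ?_
    rintro y (⟨hya, hyx⟩ | ⟨rfl, hyx⟩) (⟨hyb, hyx'⟩ | ⟨rfl, hyx'⟩)
    · exact Set.disjoint_left.1 (hV.disjoint a b hab) hya hyb
    · exact hyx (ball_subset_closedBall hyx')
    · exact hyx' (ball_subset_closedBall hyx)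
    · exact hab rfl
  subset_ball a := by
    rintro y (⟨hya, -⟩ | ⟨rfl, hy⟩)
    exacts [hV.subset_ball a hya, ball_subset_ball hr hy]

lemma sdiff_iUnion_insertBall_subset (Z : Set M) (V : M → Set M) (x : M) (r : ℝ) :
    Z \ ⋃ a, insertBall V x r a ⊆ ((Z \ ⋃ a, V a) \ ball x r) ∪ (Z ∩ sphere x r) := by
  rintro y ⟨hyZ, hy⟩
  have hball : y ∉ ball x r := fun h => hy (mem_iUnion.2 ⟨x, Or.inr ⟨rfl, h⟩⟩)
  by_cases hsphere : y ∈ sphere x r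
  · exact Or.inr ⟨hyZ, hsphere⟩
  · refine Or.inl ⟨⟨hyZ, fun h => hy ?_⟩, hball⟩
    obtain ⟨a, ha⟩ := mem_iUnion.1 h
    refine mem_iUnion.2 ⟨a, Or.inl ⟨ha, ?_⟩⟩
    rw [← ball_union_sphere]
    exact not_or.2 ⟨hball, hsphere⟩

variable [MeasurableSpace M] {μ : Measure M} {Z : Set M}

lemma exists_isBallLayer_measure_inter_biUnion_ball_ne_top {ρ : M → ℝ} (hρ : ∀ x, ρ x ≤ R)
    (hμ : ∀ x, μ (Z ∩ sphere x (ρ x)) ≠ ∞) (F : Finset M) :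
    ∃ V, IsBallLayer R V ∧ μ ((Z \ ⋃ a, V a) ∩ ⋃ x ∈ F, ball x (ρ x)) ≠ ∞ := by
  classical
  induction F using Finset.induction_on with
  | empty => exact ⟨_, isBallLayer_empty R, by simp⟩
  | insert x F _ ih =>
    obtain ⟨V, hV, hfin⟩ := ih
    refine ⟨_, hV.insertBall x (hρ x), ?_⟩
    have hsub : (Z \ ⋃ a, insertBall V x (ρ x) a) ∩ ⋃ y ∈ insert x F, ball y (ρ y) ⊆
        ((Z \ ⋃ a, V a) ∩ ⋃ y ∈ F, ball y (ρ y)) ∪ (Z ∩ sphere x (ρ x)) := by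
      rintro y ⟨hy, hyF⟩
      rw [Finset.set_biUnion_insert] at hyF
      exact (sdiff_iUnion_insertBall_subset Z V x (ρ x) hy).imp_left fun hy' =>
        ⟨hy'.1, hyF.resolve_left hy'.2⟩
    exact measure_ne_top_of_subset hsub (measure_union_ne_top hfin (hμ x))

lemma exists_isBallLayer_measure_sdiff_ne_top [CompactSpace M] {ρ : M → ℝ} (hρ₀ : ∀ x, 0 < ρ x)
    (hρ : ∀ x, ρ x ≤ R) (hμ : ∀ x, μ (Z ∩ sphere x (ρ x)) ≠ ∞) :
    ∃ V, IsBallLayer R V ∧ μ (Z \ ⋃ a, V a) ≠ ∞ := by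
  obtain ⟨F, hF⟩ := isCompact_univ.elim_finite_subcover (fun x : M => ball x (ρ x))
    (fun _ => isOpen_ball) fun y _ => mem_iUnion.2 ⟨y, mem_ball_self (hρ₀ y)⟩
  obtain ⟨V, hV, hfin⟩ := exists_isBallLayer_measure_inter_biUnion_ball_ne_top hρ hμ F
  exact ⟨V, hV, by rwa [inter_eq_left.2 ((subset_univ _).trans hF)] at hfin⟩

-- A layer whose remainder `Z \ ⋃ a, V a` is almost minimal cannot be improved much by cutting
-- along a sphere instead.
lemma exists_isBallLayer_measure_inter_ball_le [OpensMeasurableSpace M]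
    (hfin : ∃ V, IsBallLayer R V ∧ μ (Z \ ⋃ a, V a) ≠ ∞) {η : ℝ≥0∞} (hη : η ≠ 0) :
    ∃ V, IsBallLayer R V ∧
      ∀ x, ∀ r ≤ R, μ ((Z \ ⋃ a, V a) ∩ ball x r) ≤ μ (Z ∩ sphere x r) + η := by
  let infimum : ℝ≥0∞ := ⨅ (V : M → Set M) (_ : IsBallLayer R V), μ (Z \ ⋃ a, V a)
  have hinf_le {V : M → Set M} (hV : IsBallLayer R V) : infimum ≤ μ (Z \ ⋃ a, V a) := iInf₂_le V hV
  have hinf_ne_top : infimum ≠ ∞ :=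
    let ⟨_, hV, hVfin⟩ := hfin
    ne_top_of_le_ne_top hVfin (hinf_le hV)
  obtain ⟨V, hV, hVmin⟩ : ∃ V, IsBallLayer R V ∧ μ (Z \ ⋃ a, V a) < infimum + η := by
    simpa only [infimum, iInf_lt_iff, exists_prop] using ENNReal.lt_add_right hinf_ne_top hη
  refine ⟨V, hV, fun x r hr => ?_⟩
  have hout : μ ((Z \ ⋃ a, V a) \ ball x r) ≠ ∞ :=
    measure_ne_top_of_subset sdiff_subset hVmin.ne_top
  rw [← ENNReal.add_le_add_iff_right hout]
  calc μ ((Z \ ⋃ a, V a) ∩ ball x r) + μ ((Z \ ⋃ a, V a) \ ball x r)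
      = μ (Z \ ⋃ a, V a) := measure_inter_add_sdiff _ measurableSet_ball
    _ ≤ infimum + η := hVmin.le
    _ ≤ μ (Z \ ⋃ a, insertBall V x r a) + η := by
        gcongr
        exact hinf_le (hV.insertBall x hr)
    _ ≤ μ ((Z \ ⋃ a, V a) \ ball x r) + μ (Z ∩ sphere x r) + η := by
        gcongr
        exact (measure_mono (sdiff_iUnion_insertBall_subset Z V x r)).trans (measure_union_le _ _)
    _ = μ (Z ∩ sphere x r) + η + μ ((Z \ ⋃ a, V a) \ ball x r) := by ring

end PseudoMetric

/-- The density below which an `n`-dimensional set is covered by `n` ball layers. Each layer costs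
a factor `3` in measure, and `2 ^ n` for halving the radius. -/
def layerConstant : ℕ → ℝ
  | 0 => 1 / 2
  | n + 1 => layerConstant n / (3 * 2 ^ n)

lemma layerConstant_pos (n : ℕ) : 0 < layerConstant n := by
  induction n with
  | zero => norm_num [layerConstant]
  | succ n ih => exact div_pos ih (by positivity)

variable [MetricSpace M] [MeasurableSpace M] [BorelSpace M]

lemma exists_hausdorffMeasure_inter_sphere_le {n : ℕ} {ε R : ℝ} (hR : 0 < R) {Z : Set M} {x : M}
    (hZ : μH[(n + 1 : ℕ)] (Z ∩ ball x R) ≤ ENNReal.ofReal (ε * R ^ (n + 1))) :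
    ∃ r ∈ Ioo (R / 2) R, μH[n] (Z ∩ sphere x r) ≤ ENNReal.ofReal (2 * ε * R ^ n) := by
  obtain ⟨r, hr, hslice⟩ := exists_hausdorffMeasure_inter_preimage_le (LipschitzWith.dist_left x)
    n.cast_nonneg (Z ∩ ball x R) (half_lt_self hR)
  refine ⟨r, hr, ?_⟩
  have hsub : Z ∩ sphere x r ⊆ Z ∩ ball x R ∩ (dist · x) ⁻¹' {r} := fun y hy =>
    ⟨⟨hy.1, (mem_sphere.1 hy.2).trans_lt hr.2⟩, hy.2⟩
  calc μH[n] (Z ∩ sphere x r)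
      ≤ μH[(n : ℝ) + 1] (Z ∩ ball x R) / ENNReal.ofReal (R - R / 2) :=
        (measure_mono hsub).trans hslice
    _ ≤ ENNReal.ofReal (ε * R ^ (n + 1)) / ENNReal.ofReal (R - R / 2) := by
        gcongr
        exact_mod_cast hZ
    _ = ENNReal.ofReal (2 * ε * R ^ n) := by
        rw [← ENNReal.ofReal_div_of_pos (by linarith)]
        congr 1
        field_simp
        ring

lemma eq_empty_of_hausdorffMeasure_zero_lt {R : ℝ} (hR : 0 < R) {Z : Set M}
    (hZ : ∀ x, μH[0] (Z ∩ ball x R) < 1) : Z = ∅ := by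
  refine eq_empty_of_forall_notMem fun z hz => (hZ z).not_ge ?_
  rw [← Measure.hausdorffMeasure_zero_singleton z]
  exact measure_mono (singleton_subset_iff.2 ⟨hz, mem_ball_self hR⟩)

variable [CompactSpace M]

lemma exists_isBallLayer_hausdorffMeasure_le {n : ℕ} {ε R : ℝ} (hε : 0 < ε) (hR : 0 < R)
    {Z : Set M}
    (hZ : ∀ x, μH[(n + 1 : ℕ)] (Z ∩ ball x R) ≤ ENNReal.ofReal (ε * R ^ (n + 1))) :
    ∃ V, IsBallLayer R V ∧
      ∀ x, μH[n] ((Z \ ⋃ a, V a) ∩ ball x (R / 2)) ≤ ENNReal.ofReal (3 * ε * R ^ n) := by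
  choose ρ hρ hsphere using fun x => exists_hausdorffMeasure_inter_sphere_le hR (hZ x)
  have hfin : ∃ V, IsBallLayer R V ∧ μH[n] (Z \ ⋃ a, V a) ≠ ∞ :=
    exists_isBallLayer_measure_sdiff_ne_top (fun x => (half_pos hR).trans (hρ x).1)
      (fun x => (hρ x).2.le) fun x => ne_top_of_le_ne_top ENNReal.ofReal_ne_top (hsphere x)
  obtain ⟨V, hV, hVmin⟩ := exists_isBallLayer_measure_inter_ball_le hfin
    (η := ENNReal.ofReal (ε * R ^ n)) (ENNReal.ofReal_pos.2 (by positivity)).ne'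
  refine ⟨V, hV, fun x => ?_⟩
  calc μH[n] ((Z \ ⋃ a, V a) ∩ ball x (R / 2))
      ≤ μH[n] ((Z \ ⋃ a, V a) ∩ ball x (ρ x)) := by
        gcongr
        exact (hρ x).1.le
    _ ≤ μH[n] (Z ∩ sphere x (ρ x)) + ENNReal.ofReal (ε * R ^ n) := hVmin x _ (hρ x).2.le
    _ ≤ ENNReal.ofReal (2 * ε * R ^ n) + ENNReal.ofReal (ε * R ^ n) := by
        gcongr
        exact hsphere x
    _ = ENNReal.ofReal (3 * ε * R ^ n) := by
        rw [← ENNReal.ofReal_add (by positivity) (by positivity)]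
        congr 1
        ring

theorem exists_isBallLayer_cover {n : ℕ} {R : ℝ} (hR : 0 < R) {Z : Set M}
    (hZ : ∀ x, μH[n] (Z ∩ ball x R) ≤ ENNReal.ofReal (layerConstant n * R ^ n)) :
    ∃ V : Fin n → M → Set M, (∀ j, IsBallLayer R (V j)) ∧ Z ⊆ ⋃ j, ⋃ a, V j a := by
  induction n generalizing R Z with
  | zero =>
    have hempty : Z = ∅ := eq_empty_of_hausdorffMeasure_zero_lt hR fun x => by
      refine lt_of_le_of_lt (by simpa using hZ x) ?_
      simp [layerConstant]
    exact ⟨Fin.elim0, fun j => j.elim0, hempty ▸ empty_subset _⟩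
  | succ n ih =>
    obtain ⟨V₀, hV₀, hrest⟩ := exists_isBallLayer_hausdorffMeasure_le (layerConstant_pos _) hR hZ
    obtain ⟨V, hV, hcover⟩ := ih (half_pos hR) fun x => (hrest x).trans_eq <| by
      rw [layerConstant, div_pow]
      congr 1
      field_simp
    refine ⟨Fin.cons V₀ V, Fin.cases hV₀ fun j => (hV j).mono (half_le_self hR.le), fun z hz => ?_⟩
    by_cases hz₀ : z ∈ ⋃ a, V₀ a
    · exact mem_iUnion.2 ⟨0, hz₀⟩
    · obtain ⟨j, hj⟩ := mem_iUnion.1 (hcover ⟨hz, hz₀⟩)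
      exact mem_iUnion.2 ⟨j.succ, hj⟩

end BallLayers

section LiftedBall

open Topology unitInterval

variable {M : Type} {S : Type*}

section PathLength

variable [PseudoEMetricSpace M] {a b c : M}

lemma pathLength_trans_le (γ : Path a b) (γ' : Path b c) :
    pathLength (γ.trans γ') ≤ pathLength γ + pathLength γ' := by
  let half : I := ⟨1 / 2, by norm_num, by norm_num⟩
  have hdouble : Monotone fun t : I => 2 * (t : ℝ) := fun _ _ h =>
    mul_le_mul_of_nonneg_left h zero_le_two
  have hfst : EqOn (γ.trans γ') (γ ∘ fun t => projIcc 0 1 zero_le_one (2 * (t : ℝ)))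
      (Iic half) := fun t ht =>
    (Path.extend_extends' _ t).symm.trans (Path.extend_trans_of_le_half γ γ' ht)
  have hsnd : EqOn (γ.trans γ') (γ' ∘ fun t => projIcc 0 1 zero_le_one (2 * (t : ℝ) - 1))
      (Ici half) := fun t ht =>
    (Path.extend_extends' _ t).symm.trans (Path.extend_trans_of_half_le γ γ' ht)
  rw [pathLength, ← Iic_union_Ici (a := half),
    eVariationOn.union _ (isGreatest_Iic (a := half)) (isLeast_Ici (a := half)),
    eVariationOn.congr hfst, eVariationOn.congr hsnd]
  exact add_le_add
    (eVariationOn.comp_le_of_monotoneOn γ _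
      (((monotone_projIcc _).comp hdouble).monotoneOn _) (mapsTo_univ _ _))
    (eVariationOn.comp_le_of_monotoneOn γ' _
      (((monotone_projIcc _).comp (hdouble.add_const (-1))).monotoneOn _) (mapsTo_univ _ _))

lemma pathLength_symm_le (γ : Path a b) : pathLength γ.symm ≤ pathLength γ :=
  eVariationOn.comp_le_of_antitoneOn γ σ (fun _ _ _ _ hxy => symm_le_symm.2 hxy)
    (mapsTo_univ _ _)

lemma edist_le_pathLength (γ : Path a b) (t : I) : edist (γ t) a ≤ pathLength γ := by
  simpa only [γ.source] using! eVariationOn.edist_le (fun t => γ t) (mem_univ t) (mem_univ 0)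

lemma homotopic_refl_of_pathLength_lt_systole {γ : Path a a} (hγ : pathLength γ < systole M) :
    γ.Homotopic (Path.refl a) := by
  contrapose! hγ
  exact iInf_le_of_le a (iInf₂_le γ hγ)

end PathLength

lemma homotopic_of_trans_symm_homotopic_refl [TopologicalSpace S] {a b : S} {γ γ' : Path a b}
    (h : (γ.trans γ'.symm).Homotopic (Path.refl a)) : γ.Homotopic γ' :=
  calc γ.Homotopic (γ.trans (Path.refl b)) := (Path.Homotopic.trans_refl γ).symm
    Path.Homotopic _ (γ.trans (γ'.symm.trans γ')) :=
      (Path.Homotopic.refl γ).hcomp (Path.Homotopic.symm_trans γ').symm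
    Path.Homotopic _ ((γ.trans γ'.symm).trans γ') := (Path.Homotopic.trans_assoc _ _ _).symm
    Path.Homotopic _ ((Path.refl a).trans γ') := h.hcomp (Path.Homotopic.refl γ')
    Path.Homotopic _ γ' := Path.Homotopic.refl_trans γ'

lemma eq_of_map_homotopic {X : Type*} [TopologicalSpace S] [TopologicalSpace X] {p : C(S, X)}
    (hp : IsCoveringMap p) {e w w' : S} (hw : p w = p w') {γ : Path e w} {δ : Path e w'}
    (h : (γ.map p.continuous).Homotopic ((δ.map p.continuous).cast rfl hw)) : w = w' := by
  have hlift {v : S} (β : Path e v) :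
      β.toContinuousMap = hp.liftPath (p.comp β.toContinuousMap) e (congrArg p β.source) :=
    (hp.eq_liftPath_iff' _).2 ⟨rfl, β.source⟩
  have hone := hp.liftPath_apply_one_eq_of_homotopicRel h e (congrArg p γ.source)
    (congrArg p δ.source)
  exact γ.target.symm.trans <| (DFunLike.congr_fun (hlift γ) 1).trans <| hone.trans <|
    (DFunLike.congr_fun (hlift δ) 1).symm.trans δ.target

/-- The points of the total space of `p` reached from `e` by paths whose projection is shorter
than `R`: the component around `e` of the preimage of a small ball. -/
def liftedBall [TopologicalSpace S] [PseudoEMetricSpace M] (p : C(S, M)) (e : S) (R : ℝ≥0∞) :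
    Set S :=
  {w | ∃ γ : Path e w, pathLength (γ.map p.continuous) < R}

variable [TopologicalSpace S] [PseudoEMetricSpace M] {p : C(S, M)} {e : S} {R : ℝ≥0∞}

lemma exists_mem_liftedBall_of_edist_lt (hp : IsCoveringMap p) (hM : IsLengthMetric M) {y : M}
    (hy : edist (p e) y < R) : ∃ w ∈ liftedBall p e R, p w = y := by
  rw [hM, iInf_lt_iff] at hy
  obtain ⟨γ, hγ⟩ := hy
  let lift : C(I, S) := hp.liftPath γ.toContinuousMap e γ.source
  have hlift (t : I) : p (lift t) = γ t := congrFun (hp.liftPath_lifts _ e γ.source) t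
  refine ⟨lift 1, ⟨⟨lift, hp.liftPath_zero _ e γ.source, rfl⟩, ?_⟩, (hlift 1).trans γ.target⟩
  exact (eVariationOn.congr fun t _ => hlift t).trans_lt hγ

lemma isOpen_liftedBall (hp : IsLocalHomeomorph p) (hM : IsLengthMetric M) (e : S) (R : ℝ≥0∞) :
    IsOpen (liftedBall p e R) := by
  refine isOpen_iff_mem_nhds.2 ?_
  rintro w ⟨γ, hγ⟩
  obtain ⟨φ, hwφ, hpφ⟩ := hp w
  obtain ⟨r, hr, hball⟩ : ∃ r > 0, eball (p w) r ⊆ φ.target :=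
    EMetric.isOpen_iff.1 φ.open_target _ (hpφ ▸ φ.map_source hwφ)
  let δ : ℝ≥0∞ := min r (R - pathLength (γ.map p.continuous))
  have hδ : 0 < δ := lt_min hr (tsub_pos_of_lt hγ)
  filter_upwards [φ.open_source.mem_nhds hwφ,
    p.continuous.continuousAt.preimage_mem_nhds (eball_mem_nhds (p w) hδ)] with v hvφ hv
  rw [mem_preimage, mem_eball', hM, iInf_lt_iff] at hv
  obtain ⟨β, hβ⟩ := hv
  have hβφ (t : I) : β t ∈ φ.target :=
    hball ((edist_le_pathLength β t).trans_lt (hβ.trans_le (min_le_left _ _)))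
  let lift : Path w v :=
    { toFun := fun t => φ.symm (β t)
      continuous_toFun := φ.continuousOn_symm.comp_continuous β.continuous hβφ
      source' := by rw [β.source, hpφ, φ.left_inv hwφ]
      target' := by rw [β.target, hpφ, φ.left_inv hvφ] }
  have hlift (t : I) : p (lift t) = β t :=
    (congrFun hpφ _).trans (φ.right_inv (hβφ t))
  refine ⟨γ.trans lift, ?_⟩
  rw [Path.map_trans]
  calc pathLength ((γ.map p.continuous).trans (lift.map p.continuous))
      ≤ pathLength (γ.map p.continuous) + pathLength β :=
        (pathLength_trans_le _ _).trans_eq <| congrArg _ <| eVariationOn.congr fun t _ => hlift t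
    _ < R := by
        rw [add_comm]
        exact lt_tsub_iff_right.1 (hβ.trans_le (min_le_right _ _))

lemma injOn_liftedBall (hp : IsCoveringMap p) (hR : 2 * R ≤ systole M) (e : S) :
    InjOn p (liftedBall p e R) := by
  rintro w ⟨γ, hγ⟩ w' ⟨γ', hγ'⟩ hw
  refine eq_of_map_homotopic hp hw (γ := γ) (δ := γ') (homotopic_of_trans_symm_homotopic_refl <|
    homotopic_refl_of_pathLength_lt_systole ?_)
  calc pathLength ((γ.map p.continuous).trans ((γ'.map p.continuous).cast rfl hw).symm)
      ≤ pathLength (γ.map p.continuous) + pathLength (γ'.map p.continuous) :=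
        (pathLength_trans_le _ _).trans (by gcongr; exact pathLength_symm_le _)
    _ < R + R := ENNReal.add_lt_add hγ hγ'
    _ = 2 * R := (two_mul R).symm
    _ ≤ systole M := hR

end LiftedBall

section DoubleCover

open Topology

variable {S : Type*} [TopologicalSpace S] [InvolutiveNeg S]

lemma exists_isOpen_disjoint_neg_preimage_subset {M : Type} [PseudoMetricSpace M] {p : C(S, M)}
    (hp : IsCoveringMap p) (hsurj : Function.Surjective p)
    (hfib : ∀ x y, p x = p y ↔ x = y ∨ x = -y) (hne : ∀ x : S, x ≠ -x) (hM : IsLengthMetric M)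
    {R : ℝ} (hR : ENNReal.ofReal (2 * R) ≤ systole M) {V : M → Set M} (hV : IsBallLayer R V) :
    ∃ B : Set S, IsOpen B ∧ Disjoint B (-B) ∧ p ⁻¹' (⋃ a, V a) ⊆ B ∪ -B := by
  choose lift hlift using hsurj
  have hneg (x : S) : p (-x) = p x := (hfib _ _).2 (Or.inr rfl)
  have hR' : 2 * ENNReal.ofReal R ≤ systole M := by simpa [ENNReal.ofReal_mul] using hR
  refine ⟨⋃ a, p ⁻¹' V a ∩ liftedBall p (lift a) (ENNReal.ofReal R), isOpen_iUnion fun a =>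
    ((hV.isOpen a).preimage p.continuous).inter
      (isOpen_liftedBall hp.isLocalHomeomorph hM _ _), ?_, ?_⟩
  · refine Set.disjoint_left.2 fun w hw hw' => ?_
    obtain ⟨a, haV, ha⟩ := mem_iUnion.1 hw
    obtain ⟨b, hbV, hb⟩ := mem_iUnion.1 hw'
    rw [mem_preimage, hneg] at hbV
    obtain rfl : a = b := by
      by_contra hab
      exact Set.disjoint_left.1 (hV.disjoint a b hab) haV hbV
    exact hne w (injOn_liftedBall hp hR' (lift a) ha hb (hneg w).symm)
  · intro w hw
    obtain ⟨a, ha⟩ := mem_iUnion.1 hw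
    have hdist : edist (p (lift a)) (p w) < ENNReal.ofReal R := by
      rw [hlift, edist_comm]
      exact edist_lt_ofReal.2 (hV.subset_ball a ha)
    obtain ⟨w', hmem, hpw⟩ := exists_mem_liftedBall_of_edist_lt hp hM hdist
    obtain rfl | rfl := (hfib _ _).1 hpw
    · exact Or.inl (mem_iUnion.2 ⟨a, ha, hmem⟩)
    · exact Or.inr (mem_iUnion.2 ⟨a, by rwa [mem_preimage, hneg], hmem⟩)

/-- The action of `{1, -1}` on `S` in which `-1` acts by negation. -/
abbrev unitsIntMulAction (S : Type*) [InvolutiveNeg S] : MulAction ℤˣ S where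
  smul u x := if u = 1 then x else -x
  one_smul _ := if_pos rfl
  mul_smul u v x := by
    change (if u * v = 1 then x else -x) =
      if u = 1 then if v = 1 then x else -x else -if v = 1 then x else -x
    obtain rfl | rfl := Int.units_eq_one_or u <;> obtain rfl | rfl := Int.units_eq_one_or v <;> simp

lemma exists_mem_nhds_disjoint_neg [T2Space S] [ContinuousNeg S] {x : S} (hx : x ≠ -x) :
    ∃ U ∈ 𝓝 x, Disjoint U (-U) := by
  obtain ⟨A, A', hA, hA', hxA, hxA', hAA'⟩ := t2_separation hx
  refine ⟨A ∩ -A', (hA.inter hA'.neg).mem_nhds ⟨hxA, hxA'⟩, ?_⟩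
  exact hAA'.mono inter_subset_left fun y hy => by simpa using hy.2

lemma isCoveringMap_of_isQuotientMap_of_eq_iff_neg [T2Space S] [ContinuousNeg S] {X : Type*}
    [TopologicalSpace X] {q : S → X} (hq : IsQuotientMap q) (hne : ∀ x : S, x ≠ -x)
    (hfib : ∀ x y, q x = q y ↔ x = y ∨ x = -y) : IsCoveringMap q := by
  let _ := unitsIntMulAction S
  have hsmul (x : S) : (-1 : ℤˣ) • x = -x := if_neg (by decide)
  suffices IsQuotientCoveringMap q ℤˣ from this.isCoveringMap
  refine
    { hq with
      continuous_const_smul := fun u => ?_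
      apply_eq_iff_mem_orbit := fun {x y} => ?_
      disjoint := fun x => ?_ }
  · obtain rfl | rfl := Int.units_eq_one_or u
    · simpa only [one_smul] using continuous_id'
    · simpa only [hsmul] using continuous_neg
  · refine (hfib x y).trans ⟨?_, ?_⟩
    · rintro (rfl | rfl)
      exacts [⟨1, one_smul _ _⟩, ⟨-1, hsmul _⟩]
    · rintro ⟨u, rfl⟩
      obtain rfl | rfl := Int.units_eq_one_or u
      exacts [Or.inl (one_smul _ _), Or.inr (hsmul _)]
  · obtain ⟨U, hU, hdisj⟩ := exists_mem_nhds_disjoint_neg (hne x)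
    refine ⟨U, hU, ?_⟩
    rintro u ⟨_, ⟨y, hy, rfl⟩, hyU⟩
    obtain rfl | rfl := Int.units_eq_one_or u
    · rfl
    · simp only [hsmul] at hyU
      exact absurd (by simpa using hyU) (Set.disjoint_left.1 hdisj hy)

end DoubleCover

section ProjectiveSpace

lemma antipodalSetoid_mk_eq_mk_iff {n : ℕ}
    (x y : sphere (0 : EuclideanSpace ℝ (Fin (n + 1))) 1) :
    Quotient.mk (antipodalSetoid n) x = Quotient.mk (antipodalSetoid n) y ↔ x = y ∨ x = -y := by
  rw [Quotient.eq, Subtype.ext_iff, Subtype.ext_iff]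
  rfl

lemma exists_pos_mul_hausdorffMeasure_eq_rvol (n : ℕ) :
    ∃ c : ℝ, 0 < c ∧ ∀ {X : Type} [EMetricSpace X] [MeasurableSpace X] [BorelSpace X] (s : Set X),
      rvol n s = ENNReal.ofReal c * μH[n] s := by
  refine ⟨Real.pi ^ ((n : ℝ) / 2) / Real.Gamma ((n : ℝ) / 2 + 1) / 2 ^ n, by positivity,
    fun s => ?_⟩
  rw [rvol, unitBallVolume, ENNReal.ofReal_div_of_pos (pow_pos two_pos n),
    ENNReal.ofReal_pow zero_le_two, ENNReal.ofReal_ofNat]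

theorem exists_notMem_iUnion_of_isBallLayer {n : ℕ} {M : Type} [PseudoMetricSpace M]
    (h : RealProjectiveSpace n ≃ₜ M) (hM : IsLengthMetric M) {R : ℝ}
    (hR : ENNReal.ofReal (2 * R) ≤ systole M) {V : Fin n → M → Set M}
    (hV : ∀ j, IsBallLayer R (V j)) : ∃ y, y ∉ ⋃ j, ⋃ a, V j a := by
  have hq : Topology.IsQuotientMap (h ∘ Quotient.mk (antipodalSetoid n)) :=
    h.isQuotientMap.comp isQuotientMap_quotient_mk'
  let p : C(sphere (0 : EuclideanSpace ℝ (Fin (n + 1))) 1, M) := ⟨_, hq.continuous⟩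
  have hfib (x y) : p x = p y ↔ x = y ∨ x = -y :=
    h.injective.eq_iff.trans (antipodalSetoid_mk_eq_mk_iff x y)
  have hp : IsCoveringMap p :=
    isCoveringMap_of_isQuotientMap_of_eq_iff_neg hq (ne_neg_of_mem_unit_sphere ℝ) hfib
  choose B hopen hdisj hcover using fun j => exists_isOpen_disjoint_neg_preimage_subset hp
    hq.surjective hfib (ne_neg_of_mem_unit_sphere ℝ) hM hR (hV j)
  have hrank : ((n + 1 : ℕ) : Cardinal) ≤ Module.rank ℝ (EuclideanSpace ℝ (Fin (n + 1))) := by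
    rw [← Module.finrank_eq_rank, finrank_euclideanSpace_fin]
  obtain ⟨w, hw⟩ := lusternik_schnirelmann_unit_sphere hrank hopen hdisj
  refine ⟨p w, fun hpw => ?_⟩
  obtain ⟨j, hj⟩ := mem_iUnion.1 hpw
  exact hw j (hcover j hj)

end ProjectiveSpace

/-- For each dimension `n` there is a constant `εₙ > 0` such that: if `g` is any Riemannian
metric on `ℝℙⁿ` and `R < (1/2)·Sys(ℝℙⁿ, g)`, then some metric ball of radius `R` in
`(ℝℙⁿ, g)` has volume at least `εₙ Rⁿ`.

The Riemannian manifold `(ℝℙⁿ, g)` is encoded as a length metric space `M` homeomorphic to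
real projective `n`-space; volumes are (normalized) Hausdorff measures. -/
theorem projective_space_ball_volume (n : ℕ) (hn : 0 < n) :
    ∃ ε : ℝ, 0 < ε ∧
      ∀ (M : Type) [MetricSpace M] [MeasurableSpace M] [BorelSpace M],
        Nonempty (M ≃ₜ RealProjectiveSpace n) → IsLengthMetric M →
        ∀ R : ℝ, 0 < R → ENNReal.ofReal (2 * R) < systole M →
          ∃ p : M, ENNReal.ofReal (ε * R ^ n) ≤ rvol n (Metric.ball p R) := by
  obtain ⟨c, hc, hrvol⟩ := exists_pos_mul_hausdorffMeasure_eq_rvol n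
  refine ⟨c * layerConstant n, mul_pos hc (layerConstant_pos n), ?_⟩
  intro M _ _ _ ⟨h⟩ hM R hR hsys
  by_contra! hsmall
  have : CompactSpace M := h.symm.compactSpace
  have hdensity (x : M) :
      μH[n] (univ ∩ ball x R) ≤ ENNReal.ofReal (layerConstant n * R ^ n) := by
    have hx := (hsmall x).le
    rw [hrvol, mul_assoc, ENNReal.ofReal_mul hc.le] at hx
    rw [univ_inter]
    exact (ENNReal.mul_le_mul_iff_right (ENNReal.ofReal_pos.2 hc).ne' ENNReal.ofReal_ne_top).1 hx
  obtain ⟨V, hV, hcover⟩ := exists_isBallLayer_cover hR hdensity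
  obtain ⟨y, hy⟩ := exists_notMem_iUnion_of_isBallLayer h.symm hM hsys.le hV
  exact hy (hcover (mem_univ y))

end
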